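/- arXiv:1503.03521 — 4 statements merged into one kernel-verified Lean document; each statement's English description precedes it below -/
import Mathlib

section
/- Let A be a C*-algebra, M ⊆ A a C*-subalgebra, and S a collection of states of M such that: (i) every φ ∈ S has a unique extension to a state φ̃ of A; and (ii) whenever x ∈ A satisfies φ̃(a* x* x a) = 0 for every a ∈ A and every φ ∈ S, then x = 0. Then for any C*-algebra B, a *-homomorphism ρ : A → B is injective if and only if its restriction to M is injective. -/
open ComplexOrder

/-- A state on a (possibly non-unital) C*-algebra: a positive continuous linear
functional of norm one. -/
def IsState {A : Type*} [NonUnitalNormedRing A] [StarRing A] [NormedSpace ℂ A]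
    (ψ : A →L[ℂ] ℂ) : Prop :=
  (∀ a : A, 0 ≤ ψ (star a * a)) ∧ ‖ψ‖ = 1

theorem aux_norm {U : Type*} [CStarAlgebra U] (a : U) (r : ℝ) (hr : ‖star a * a‖ ≤ r) :
    ‖(r : ℂ) • (1 : U) - (2 : ℂ) • (star a * a)‖ ≤ r := by
  letI : PartialOrder U := CStarAlgebra.spectralOrder U
  haveI : StarOrderedRing U := CStarAlgebra.spectralOrderedRing U
  rcases subsingleton_or_nontrivial U with hU | hU
  · have : (r : ℂ) • (1 : U) - (2 : ℂ) • (star a * a) = 0 := Subsingleton.elim _ _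
    rw [this, norm_zero]
    exact (norm_nonneg _).trans hr
  have hc : 0 ≤ star a * a := star_mul_self_nonneg a
  have hsa : IsSelfAdjoint (star a * a) := IsSelfAdjoint.star_mul_self a
  have key : (r : ℂ) • (1 : U) - (2 : ℂ) • (star a * a)
      = cfc (fun x : ℝ => r - 2 * x) (star a * a) := by
    rw [cfc_sub (fun _ => r) (fun x : ℝ => 2 * x) (star a * a), cfc_const r (star a * a),
      cfc_const_mul_id (2 : ℝ) (star a * a), Algebra.algebraMap_eq_smul_one]
    congr 1
  rw [key]
  refine norm_cfc_le ((norm_nonneg _).trans hr) fun x hx => ?_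
  have h0 : 0 ≤ x := spectrum_nonneg_of_nonneg hc hx
  have h1 : x ≤ r := by
    have := spectrum.norm_le_norm_of_mem hx
    exact (le_abs_self x).trans (this.trans hr)
  rw [Real.norm_eq_abs, abs_le]
  constructor <;> linarith

theorem aux_pos {U : Type*} [CStarAlgebra U] (g : U →L[ℂ] ℂ) (hg : ‖g‖ ≤ 1)
    (happ : ∀ ε > 0, ∃ e : U, ‖e‖ ≤ 1 ∧ 1 - ε < (g (star e * e)).re) (a : U) :
    0 ≤ g (star a * a) := by
  have hle : ∀ x : U, ‖g x‖ ≤ ‖x‖ := fun x => by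
    simpa using g.le_of_opNorm_le hg x
  have hone : ‖(1 : U)‖ ≤ 1 := by
    rcases subsingleton_or_nontrivial U with hU | hU
    · rw [Subsingleton.elim (1 : U) 0, norm_zero]; exact zero_le_one
    · simp
  have g1le : ‖g 1‖ ≤ 1 := (hle 1).trans hone
  have g1 : g 1 = 1 := by
    have hre : 1 ≤ (g 1).re := by
      refine le_of_forall_pos_lt_add fun ε hε => ?_
      obtain ⟨e, he, he2⟩ := happ (ε / 2) (by positivity)
      have h := aux_norm e 1 (by
        rw [CStarRing.norm_star_mul_self]; nlinarith [norm_nonneg e])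
      have h2 := (Complex.abs_re_le_norm _).trans ((hle _).trans h)
      rw [abs_le] at h2
      simp at h2
      linarith [h2.1]
    have hn := Complex.sq_norm (g 1)
    rw [Complex.normSq_apply] at hn
    have : ‖g 1‖ ^ 2 ≤ 1 := by nlinarith [norm_nonneg (g 1)]
    apply Complex.ext
    · simp; nlinarith [mul_self_nonneg (g 1).im]
    · simp; nlinarith [mul_self_nonneg (g 1).im]
  set c := star a * a with hcdef
  have hcs : star c = c := by simp [hcdef]
  have hre : 0 ≤ (g c).re := by
    have h := aux_norm a ‖c‖ le_rfl
    have h2 := (Complex.abs_re_le_norm _).trans ((hle _).trans h)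
    rw [abs_le] at h2
    simp [g1, ← hcdef] at h2
    linarith [h2.2]
  have him : (g c).im = 0 := by
    have key : ∀ t : ℝ, ((g c).im + t) ^ 2 ≤ ‖c‖ ^ 2 + t ^ 2 := by
      intro t
      have h1 : ‖c + (t * Complex.I) • (1 : U)‖ ^ 2 ≤ ‖c‖ ^ 2 + t ^ 2 := by
        rw [sq, ← CStarRing.norm_star_mul_self]
        have : star (c + (t * Complex.I) • (1 : U)) * (c + (t * Complex.I) • (1 : U))
            = c * c + ((t : ℂ) ^ 2) • (1 : U) := by
          simp only [star_add, hcs, star_smul, star_one, add_mul, mul_add, smul_mul_assoc,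
            mul_smul_comm, one_mul, mul_one]
          have h3 : star ((t : ℂ) * Complex.I) = -(t * Complex.I) := by simp
          rw [h3, smul_add, smul_smul,
            show (t : ℂ) * Complex.I * -(t * Complex.I) = (t : ℂ) ^ 2 by
            linear_combination -(t : ℂ) ^ 2 * Complex.I_sq, neg_smul]
          abel
        rw [this]
        refine (norm_add_le _ _).trans (add_le_add ?_ ?_)
        · rw [sq]; exact norm_mul_le _ _
        · rw [norm_smul]
          simp only [norm_pow, Complex.norm_real, Real.norm_eq_abs, sq_abs]
          nlinarith [sq_nonneg t]
      have h2 := (Complex.abs_im_le_norm _).trans (hle (c + (t * Complex.I) • (1 : U)))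
      have h3 : (g (c + (t * Complex.I) • (1 : U))).im = (g c).im + t := by
        simp [g1]
      rw [h3] at h2
      rw [← sq_abs]
      exact (pow_le_pow_left₀ (abs_nonneg _) h2 2).trans h1
    by_contra hne
    have := key ((‖c‖ ^ 2 + 1) / (2 * (g c).im))
    have h4 : 2 * (g c).im * ((‖c‖ ^ 2 + 1) / (2 * (g c).im)) = ‖c‖ ^ 2 + 1 := by
      field_simp
    nlinarith [sq_nonneg (g c).im]
  rw [Complex.le_def]
  exact ⟨hre, him.symm⟩

theorem aux_approx {E : Type*} [NonUnitalCStarAlgebra E] (φ : E →L[ℂ] ℂ) (hφ : IsState φ)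
    (ε : ℝ) (hε : 0 < ε) : ∃ e : E, ‖e‖ ≤ 1 ∧ 1 - ε < (φ (star e * e)).re := by
  letI : PartialOrder E := CStarAlgebra.spectralOrder E
  haveI : StarOrderedRing E := CStarAlgebra.spectralOrderedRing E
  obtain ⟨hpos, hn⟩ := hφ
  let f : E →ₚ[ℂ] ℂ := PositiveLinearMap.mk₀ φ.toLinearMap (fun a ha => by
    obtain ⟨b, rfl⟩ := CStarAlgebra.nonneg_iff_eq_star_mul_self.mp ha
    exact hpos b)
  have hCS : ∀ a b : E, ‖φ (star a * b)‖ ^ 2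
      ≤ (φ (star a * a)).re * (φ (star b * b)).re := by
    intro a b
    have h := norm_inner_le_norm (𝕜 := ℂ) (f.toPreGNS a) (f.toPreGNS b)
    have h1 : ‖φ (star a * b)‖ ≤ √(φ (star a * a)).re * √(φ (star b * b)).re := h
    have ha := (Complex.le_def.mp (hpos a)).1
    have hb := (Complex.le_def.mp (hpos b)).1
    calc _ ≤ (√(φ (star a * a)).re * √(φ (star b * b)).re) ^ 2 :=
          pow_le_pow_left₀ (norm_nonneg _) h1 2
      _ = _ := by rw [mul_pow, Real.sq_sqrt ha, Real.sq_sqrt hb]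
  have hle : ∀ x : E, ‖φ x‖ ≤ ‖x‖ := fun x => by
    simpa using φ.le_of_opNorm_le hn.le x
  obtain ⟨m, hm1, hm2⟩ : ∃ m : E, ‖m‖ < 1 ∧ 1 - ε / 2 < ‖φ m‖ :=
    φ.exists_lt_apply_of_lt_opNorm (by rw [hn]; linarith)
  have hau := CStarAlgebra.increasingApproximateUnit E
  have ht := (φ.continuous.norm.tendsto m).comp (hau.tendsto_mul_right m)
  haveI := hau.neBot
  obtain ⟨e, he1, he2, he3⟩ := ((ht.eventually (lt_mem_nhds hm2)).and
    (hau.eventually_norm.and hau.eventually_star_eq)).exists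
  refine ⟨e, he2, ?_⟩
  have h := hCS e m
  rw [he3] at h ⊢
  have hmm : (φ (star m * m)).re ≤ 1 := by
    refine (Complex.re_le_norm _).trans ((hle _).trans ?_)
    rw [CStarRing.norm_star_mul_self]; nlinarith [norm_nonneg m]
  have hee := (Complex.le_def.mp (hpos e)).1
  rw [he3] at hee
  simp only [Complex.zero_re, Function.comp_apply] at hee he1
  nlinarith [mul_le_mul_of_nonneg_left hmm hee, norm_nonneg (φ (e * m)), sq_nonneg (‖φ (e * m)‖ - 1)]

theorem aux_ext {A B : Type*} [NonUnitalCStarAlgebra A] [NonUnitalCStarAlgebra B]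
    (M : NonUnitalStarSubalgebra ℂ A) (hM : IsClosed (M : Set A))
    (φ : M →L[ℂ] ℂ) (hφ : IsState φ) (ρ : A →⋆ₙₐ[ℂ] B) (hρ : Set.InjOn ρ (M : Set A)) :
    ∃ ψ : A →L[ℂ] ℂ, (IsState ψ ∧ ∀ m : M, ψ (m : A) = φ m) ∧ ∀ x, ρ x = 0 → ψ x = 0 := by
  haveI := hM
  let σ : M →⋆ₙₐ[ℂ] Unitization ℂ B :=
    ((Unitization.inrNonUnitalStarAlgHom ℂ B).comp ρ).comp
      (NonUnitalStarSubalgebraClass.subtype M)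
  have hσ : ∀ m : M, σ m = ((ρ m : B) : Unitization ℂ B) := fun m => rfl
  have hinj : Function.Injective σ := by
    intro x y hxy
    rw [hσ, hσ] at hxy
    exact Subtype.ext (hρ x.2 y.2 (Unitization.inr_injective hxy))
  let L : M →ₗᵢ[ℂ] Unitization ℂ B :=
    { toFun := σ
      map_add' := map_add σ
      map_smul' := map_smul σ
      norm_map' := NonUnitalStarAlgHom.norm_map σ hinj }
  obtain ⟨g, hg1, hg2⟩ := exists_extension_norm_eq (LinearMap.range L.toLinearMap)
    (φ.comp (L.equivRange.symm.toContinuousLinearEquiv : _ →L[ℂ] M))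
  have hgσ : ∀ m : M, g (σ m) = φ m := by
    intro m
    have := hg1 (L.equivRange m)
    have h2 : g (L m) = φ m := by simpa using this
    exact h2
  have hgn : ‖g‖ ≤ 1 := by
    rw [hg2]
    refine ContinuousLinearMap.opNorm_le_bound _ zero_le_one fun x => ?_
    have := φ.le_of_opNorm_le hφ.2.le (L.equivRange.symm x)
    simpa using this
  have hpos := aux_pos g hgn (fun ε hε => by
    obtain ⟨e, he1, he2⟩ := aux_approx φ hφ ε hε
    refine ⟨σ e, ?_, ?_⟩
    · rw [NonUnitalStarAlgHom.norm_map σ hinj]; exact he1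
    · rw [← map_star, ← map_mul, hgσ]; exact he2)
  let τ : A →⋆ₙₐ[ℂ] Unitization ℂ B := (Unitization.inrNonUnitalStarAlgHom ℂ B).comp ρ
  have hτσ : ∀ m : M, τ m = σ m := fun m => rfl
  let ψ : A →L[ℂ] ℂ := LinearMap.mkContinuous
    (g.toLinearMap.comp ({ toFun := τ, map_add' := map_add τ, map_smul' := map_smul τ } :
      A →ₗ[ℂ] Unitization ℂ B)) 1 (fun x => by
        have h1 := g.le_of_opNorm_le hgn (τ x)
        have h2 := NonUnitalStarAlgHom.norm_apply_le τ x
        simpa using h1.trans (by simpa using h2))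
  have hψ : ∀ x, ψ x = g (τ x) := fun x => rfl
  have hψφ : ∀ m : M, ψ (m : A) = φ m := fun m => by rw [hψ, hτσ, hgσ]
  refine ⟨ψ, ⟨⟨fun a => ?_, le_antisymm ?_ ?_⟩, hψφ⟩, fun x hx => ?_⟩
  · rw [hψ, map_mul, map_star]; exact hpos _
  · exact LinearMap.mkContinuous_norm_le _ zero_le_one _
  · rw [← hφ.2]
    refine ContinuousLinearMap.opNorm_le_bound _ (norm_nonneg _) fun m => ?_
    rw [← hψφ]; exact ψ.le_opNorm _
  · rw [hψ]
    have : τ x = ((ρ x : B) : Unitization ℂ B) := rfl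
    rw [this, hx]; simp

/-- Abstract uniqueness theorem: if every state in `S` has a unique extension to `A`
and the unique extensions jointly detect nonzero elements (faithfulness of the direct
sum of the associated GNS representations), then a *-homomorphism out of `A` is
injective iff it is injective on `M`. -/
theorem abstract_uniqueness {A B : Type*}
    [NonUnitalNormedRing A] [StarRing A] [CStarRing A] [NormedSpace ℂ A]
    [IsScalarTower ℂ A A] [SMulCommClass ℂ A A] [StarModule ℂ A] [CompleteSpace A]
    [NonUnitalNormedRing B] [StarRing B] [CStarRing B] [NormedSpace ℂ B]
    [IsScalarTower ℂ B B] [SMulCommClass ℂ B B] [StarModule ℂ B] [CompleteSpace B]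
    (M : NonUnitalStarSubalgebra ℂ A) (hM : IsClosed (M : Set A))
    (S : Set (M →L[ℂ] ℂ)) (hS : ∀ φ ∈ S, IsState φ)
    (hext : ∀ φ ∈ S, ∃! ψ : A →L[ℂ] ℂ, IsState ψ ∧ ∀ m : M, ψ (m : A) = φ m)
    (hfaith : ∀ x : A,
      (∀ φ ∈ S, ∀ ψ : A →L[ℂ] ℂ, (IsState ψ ∧ ∀ m : M, ψ (m : A) = φ m) →
        ∀ a : A, ψ (star a * star x * x * a) = 0) → x = 0)
    (ρ : A →⋆ₙₐ[ℂ] B) :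
    Function.Injective ρ ↔ Set.InjOn ρ (M : Set A) := by
  letI : NonUnitalCStarAlgebra A := {}
  letI : NonUnitalCStarAlgebra B := {}
  refine ⟨fun h => h.injOn, fun h => ?_⟩
  refine (injective_iff_map_eq_zero ρ).mpr fun x hx => hfaith x fun φ hφ ψ hψ a => ?_
  obtain ⟨ψ', h1, h2⟩ := aux_ext M hM φ (hS φ hφ) ρ h
  rw [(hext φ hφ).unique hψ h1]
  exact h2 _ (by simp [hx])
end

section
/- Let A be a C*-algebra, M ⊆ A a C*-subalgebra, and S a collection of states of M such that: (i) every φ ∈ S has a unique extension to a state φ̃ of A; and (ii) whenever x ∈ A satisfies φ̃(a* x* x a) = 0 for every a ∈ A and every φ ∈ S, then x = 0. Then every nonzero closed two-sided ideal J of A satisfies J ∩ M ≠ {0}. -/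
open ComplexOrder

namespace IdealMeets

theorem norm_sub_le {B : Type*} [CStarAlgebra B] (a : B) (ha : ‖a‖ ≤ 1) (z : ℂ) (R : ℝ)
    (hR : 0 ≤ R) (h : ∀ s : ℝ, 0 ≤ s → s ≤ 1 → ‖(s : ℂ) - z‖ ≤ R) :
    ‖star a * a - algebraMap ℂ B z‖ ≤ R := by
  let _ : PartialOrder B := CStarAlgebra.spectralOrder B
  have : StarOrderedRing B := CStarAlgebra.spectralOrderedRing B
  have hsa : IsSelfAdjoint (star a * a) := IsSelfAdjoint.star_mul_self a
  have hn : IsStarNormal (star a * a) := hsa.isStarNormal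
  have h1 : star a * a - algebraMap ℂ B z = cfc (fun w : ℂ => w - z) (star a * a) := by
    rw [cfc_sub (fun w : ℂ => w) (fun _ => z) (star a * a), cfc_id' ℂ (star a * a),
      cfc_const z (star a * a)]
  rw [h1]
  apply norm_cfc_le hR
  intro x hx
  have hre : x = (x.re : ℂ) := hsa.mem_spectrum_eq_re hx
  have hnn : 0 ≤ x := spectrum_nonneg_of_nonneg (star_mul_self_nonneg a) hx
  have hno : ‖x‖ ≤ 1 := by
    rcases subsingleton_or_nontrivial B with hB | hB
    · simp [spectrum.of_subsingleton] at hx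
    refine (spectrum.norm_le_norm_of_mem hx).trans ?_
    rw [CStarRing.norm_star_mul_self]
    nlinarith [norm_nonneg a]
  rw [hre]
  refine h _ (Complex.nonneg_iff.mp hnn).1 ((Complex.re_le_norm x).trans hno)

theorem pos_of_contraction {B : Type*} [CStarAlgebra B] (Ψ : B →L[ℂ] ℂ) (hΨ : ‖Ψ‖ ≤ 1)
    (hu : ∀ ε > 0, ∃ u : B, ‖u‖ ≤ 1 ∧ 1 - ε ≤ (Ψ (star u * u)).re) (a : B) :
    0 ≤ Ψ (star a * a) := by
  have hle : ∀ x : B, ‖Ψ x‖ ≤ ‖x‖ := fun x => by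
    simpa using Ψ.le_of_opNorm_le hΨ x
  have hB : Nontrivial B := by
    by_contra hB
    rw [not_nontrivial_iff_subsingleton] at hB
    obtain ⟨u, _, h⟩ := hu (1/2) (by norm_num)
    rw [Subsingleton.elim (star u * u) 0] at h
    norm_num at h
  have hlam : ∀ z : ℂ, Ψ (algebraMap ℂ B z) = z * Ψ 1 := fun z => by
    rw [Algebra.algebraMap_eq_smul_one, map_smul, smul_eq_mul]
  -- `Ψ 1 = 1`
  have hre : 1 ≤ (Ψ 1).re := by
    refine le_of_forall_pos_le_add fun ε hε => ?_
    obtain ⟨u, hu1, hu2⟩ := hu (ε / 2) (by positivity)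
    have := (hle _).trans (norm_sub_le u hu1 (1/2 : ℂ) (1/2) (by norm_num) (fun s h0 h1 => by
      have : (s : ℂ) - 1/2 = ((s - 1/2 : ℝ) : ℂ) := by push_cast; ring
      rw [this, Complex.norm_real, Real.norm_eq_abs, abs_le]
      constructor <;> linarith))
    rw [map_sub, hlam] at this
    have h3 := (Complex.re_le_norm _).trans this
    have h4 : ((1/2 : ℂ) * Ψ 1).re = (Ψ 1).re / 2 := by
      simp [Complex.mul_re]; ring
    rw [Complex.sub_re, h4] at h3
    linarith
  have hn1 : ‖Ψ 1‖ ≤ 1 := by simpa using hle 1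
  have h1 : Ψ 1 = 1 := by
    have h5 : (Ψ 1).re ^ 2 + (Ψ 1).im ^ 2 ≤ 1 := by
      have := Complex.sq_norm (Ψ 1)
      rw [Complex.normSq_apply] at this
      nlinarith [norm_nonneg (Ψ 1)]
    apply Complex.ext
    · simp; nlinarith [sq_nonneg (Ψ 1).im]
    · simp; nlinarith [sq_nonneg (Ψ 1).im]
  -- contractive case
  have key : ∀ b : B, ‖b‖ ≤ 1 → 0 ≤ Ψ (star b * b) := by
    intro b hb
    have hdisc : ∀ t : ℝ, ((Ψ (star b * b)).re - 1/2) ^ 2 + ((Ψ (star b * b)).im - t) ^ 2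
        ≤ 1/4 + t ^ 2 := by
      intro t
      have := (hle _).trans (norm_sub_le b hb (⟨1/2, t⟩ : ℂ) (Real.sqrt (1/4 + t^2))
        (Real.sqrt_nonneg _) (fun s h0 h1 => by
          apply Real.le_sqrt_of_sq_le
          rw [Complex.sq_norm, Complex.normSq_apply]
          simp
          nlinarith))
      rw [map_sub, hlam, h1, mul_one] at this
      have h2 := pow_le_pow_left₀ (norm_nonneg _) this 2
      rw [Real.sq_sqrt (by positivity), Complex.sq_norm, Complex.normSq_apply] at h2
      simp at h2
      nlinarith
    set z := Ψ (star b * b)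
    have him : z.im = 0 := by
      by_contra hne
      have := hdisc (-1 / z.im)
      have h6 : z.im * (-1 / z.im) = -1 := by field_simp
      nlinarith [sq_nonneg (z.re - 1/2), sq_nonneg z.im]
    have := hdisc 0
    rw [Complex.nonneg_iff]
    refine ⟨?_, him.symm⟩
    nlinarith [sq_nonneg z.im]
  rcases eq_or_ne a 0 with rfl | ha
  · simp
  have hna : 0 < ‖a‖ := norm_pos_iff.mpr ha
  have hk := key (((‖a‖⁻¹ : ℝ) : ℂ) • a) (by
    rw [norm_smul, Complex.norm_real, norm_inv, norm_norm, inv_mul_cancel₀ hna.ne'])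
  have heq : star a * a = (((‖a‖ ^ 2 : ℝ)) : ℂ) •
      (star ((((‖a‖⁻¹ : ℝ) : ℂ)) • a) * (((‖a‖⁻¹ : ℝ) : ℂ) • a)) := by
    rw [star_smul, smul_mul_smul_comm, smul_smul]
    have : ((‖a‖ ^ 2 : ℝ) : ℂ) * (star ((‖a‖⁻¹ : ℝ) : ℂ) * ((‖a‖⁻¹ : ℝ) : ℂ)) = 1 := by
      have h7 : star ((‖a‖⁻¹ : ℝ) : ℂ) = ((‖a‖⁻¹ : ℝ) : ℂ) := Complex.conj_ofReal _
      rw [h7]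
      norm_cast
      field_simp
    rw [this, one_smul]
  rw [heq, map_smul, smul_eq_mul]
  exact mul_nonneg (by exact_mod_cast sq_nonneg ‖a‖) hk

theorem exists_unitization_ext {A : Type*} [NonUnitalCStarAlgebra A] (ψ : A →L[ℂ] ℂ)
    (hψ : ‖ψ‖ ≤ 1) :
    ∃ Ψ : Unitization ℂ A →L[ℂ] ℂ, ‖Ψ‖ ≤ 1 ∧ ∀ a : A, Ψ (a : Unitization ℂ A) = ψ a := by
  let p : Submodule ℂ (Unitization ℂ A) := LinearMap.range (Unitization.inrHom ℂ ℂ A)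
  let f₀ : p →ₗ[ℂ] ℂ := (ψ : A →ₗ[ℂ] ℂ) ∘ₗ (Unitization.sndHom ℂ ℂ A) ∘ₗ p.subtype
  have hf₀ : ∀ x : p, ‖f₀ x‖ ≤ 1 * ‖x‖ := by
    rintro ⟨_, a, rfl⟩
    have : ‖(⟨Unitization.inrHom ℂ ℂ A a, a, rfl⟩ : p)‖ = ‖a‖ := Unitization.norm_inr a
    rw [this]
    exact ψ.le_of_opNorm_le hψ a
  obtain ⟨g, hg, hgn⟩ := exists_extension_norm_eq p (f₀.mkContinuous 1 hf₀)
  refine ⟨g, hgn.le.trans (LinearMap.mkContinuous_norm_le _ zero_le_one _), fun a => ?_⟩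
  exact hg ⟨Unitization.inrHom ℂ ℂ A a, a, rfl⟩

theorem exists_almost_unit {N : Type*} [NonUnitalCStarAlgebra N] (φ : N →L[ℂ] ℂ)
    (hpos : ∀ a : N, 0 ≤ φ (star a * a)) (hn : ‖φ‖ = 1) (ε : ℝ) (hε : 0 < ε) :
    ∃ u : N, ‖u‖ ≤ 1 ∧ 1 - ε ≤ (φ (star u * u)).re := by
  let _ : PartialOrder N := CStarAlgebra.spectralOrder N
  have : StarOrderedRing N := CStarAlgebra.spectralOrderedRing N
  have hle : ∀ x : N, ‖φ x‖ ≤ ‖x‖ := fun x => by simpa using φ.le_of_opNorm_le hn.le x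
  -- hermitian
  have herm : ∀ x y : N, (φ (star y * x)).re = (φ (star x * y)).re := by
    intro x y
    have h1 := (Complex.nonneg_iff.mp (hpos (x + Complex.I • y))).2
    have hx := (Complex.nonneg_iff.mp (hpos x)).2
    have hy := (Complex.nonneg_iff.mp (hpos y)).2
    simp [star_add, star_smul, add_mul, mul_add, smul_mul_assoc, mul_smul_comm] at h1
    linarith
  obtain ⟨m, hm1, hm2⟩ : ∃ m : N, ‖m‖ ≤ 1 ∧ 1 - ε / 4 ≤ (φ m).re := by
    obtain ⟨m, hm1, hm2⟩ := φ.exists_lt_apply_of_lt_opNorm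
      (show 1 - ε / 4 < ‖φ‖ by rw [hn]; linarith)
    have hc : ‖star (φ m) / (‖φ m‖ : ℂ)‖ ≤ 1 := by
      rw [norm_div, norm_star, Complex.norm_real, norm_norm]
      exact div_self_le_one _
    refine ⟨(star (φ m) / (‖φ m‖ : ℂ)) • m, ?_, ?_⟩
    · rw [norm_smul]
      exact mul_le_one₀ hc (norm_nonneg _) hm1.le
    · have h0 : star (φ m) / (‖φ m‖ : ℂ) * φ m = (‖φ m‖ : ℂ) := by
        have h1 : star (φ m) * φ m = (‖φ m‖ : ℂ) * (‖φ m‖ : ℂ) := by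
          have := Complex.conj_mul' (φ m)
          rw [← sq]; exact this
        rw [div_mul_eq_mul_div, h1]
        exact mul_self_div_self _
      rw [map_smul, smul_eq_mul, h0, Complex.ofReal_re]
      exact hm2.le
  have hau := CStarAlgebra.increasingApproximateUnit N
  have hT : Filter.Tendsto (fun u => φ (u * m)) (CStarAlgebra.approximateUnit N)
      (nhds (φ m)) := (φ.continuous.tendsto _).comp (hau.tendsto_mul_right m)
  have hT2 := (Complex.continuous_re.tendsto _).comp hT
  have hev := hT2.eventually (lt_mem_nhds (show (φ m).re - ε / 4 < (φ m).re by linarith))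
  have := hau.neBot
  obtain ⟨u, ⟨hu1, hu2⟩, hu3⟩ := ((hev.and hau.eventually_norm).and hau.eventually_star_eq).exists
  refine ⟨u, hu2, ?_⟩
  have h1 := (Complex.nonneg_iff.mp (hpos (u - m))).1
  have h2 := herm u m
  have h3 : (φ (star m * m)).re ≤ 1 := by
    refine (Complex.re_le_norm _).trans ((hle _).trans ?_)
    rw [CStarRing.norm_star_mul_self]
    nlinarith [norm_nonneg m]
  simp only [star_sub, sub_mul, mul_sub, map_sub, Complex.sub_re] at h1
  rw [hu3] at h1 h2 ⊢
  simp only [Function.comp] at hu1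
  linarith

theorem norm_le_sa {A : Type*} [NonUnitalCStarAlgebra A]
    (M : NonUnitalStarSubalgebra ℂ A) (hM : IsClosed (M : Set A))
    (J : Submodule ℂ A) (hJc : IsClosed (J : Set A))
    (hJl : ∀ a : A, ∀ x ∈ J, a * x ∈ J) (hJr : ∀ a : A, ∀ x ∈ J, x * a ∈ J)
    (hJs : ∀ x ∈ J, star x ∈ J) (hJM : ∀ x ∈ J, x ∈ M → x = 0)
    (h k : A) (hh : IsSelfAdjoint h) (hk : IsSelfAdjoint k) (hhM : h ∈ M) (hkJ : h - k ∈ J) :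
    ‖h‖ ≤ ‖k‖ := by
  let D : NonUnitalStarSubalgebra ℂ (A × A) :=
    { carrier := {p | p.1 - p.2 ∈ J}
      add_mem' := fun {p q} hp hq => by
        have := J.add_mem hp hq
        simp only [Set.mem_ofPred_eq, Prod.fst_add, Prod.snd_add]
        convert this using 1; abel
      zero_mem' := by simp
      mul_mem' := fun {p q} hp hq => by
        have := J.add_mem (hJl p.1 _ hq) (hJr q.2 _ hp)
        simp only [Set.mem_ofPred_eq, Prod.fst_mul, Prod.snd_mul]
        convert this using 1; noncomm_ring
      smul_mem' := fun c p hp => by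
        have := J.smul_mem c hp
        simpa [smul_sub] using this
      star_mem' := fun {p} hp => by
        have := hJs _ hp
        simpa [star_sub] using this }
  have hD : IsClosed (D : Set (A × A)) :=
    hJc.preimage (continuous_fst.sub continuous_snd)
  let f : ℝ → ℝ := fun t => max 0 (|t| - ‖k‖)
  have hf : Continuous f := by fun_prop
  have hf0 : f 0 = 0 := by simp [f]
  have hsa : IsSelfAdjoint (h, k) := by
    ext <;> simp [hh.star_eq, hk.star_eq]
  have hmem : cfcₙ f (h, k) ∈ D := cfcₙ_mem (𝕜' := ℂ) (hs := hD) f (show (h, k) ∈ D from hkJ)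
  have hprod : cfcₙ f (h, k) = (cfcₙ f h, cfcₙ f k) :=
    cfcₙ_map_prod (S := ℂ) f h k hf.continuousOn
  have hfk : cfcₙ f k = 0 := by
    rw [← norm_le_zero_iff]
    refine norm_cfcₙ_le fun x hx => ?_
    have : ‖x‖ ≤ ‖k‖ := by
      have := norm_apply_le_norm_cfcₙ (fun x : ℝ => x) k hx
      rwa [cfcₙ_id' ℝ k] at this
    rw [Real.norm_eq_abs] at this
    simp [f, this]
  have hfhM : cfcₙ f h ∈ M := cfcₙ_mem (𝕜' := ℂ) (hs := hM) f hhM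
  have hfhJ : cfcₙ f h ∈ J := by
    rw [hprod, hfk] at hmem
    have : cfcₙ f h - 0 ∈ J := hmem
    simpa using this
  have hfh := hJM _ hfhJ hfhM
  calc ‖h‖ = ‖cfcₙ (fun x : ℝ => x) h‖ := by rw [cfcₙ_id' ℝ h]
    _ ≤ ‖k‖ := by
      refine norm_cfcₙ_le fun x hx => ?_
      have := norm_apply_le_norm_cfcₙ f h hx hf.continuousOn hf0
      rw [hfh, norm_zero, norm_le_zero_iff] at this
      have h8 : |x| - ‖k‖ ≤ 0 := this ▸ le_max_right 0 (|x| - ‖k‖)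
      rw [Real.norm_eq_abs]; linarith

theorem norm_le {A : Type*} [NonUnitalCStarAlgebra A]
    (M : NonUnitalStarSubalgebra ℂ A) (hM : IsClosed (M : Set A))
    (J : Submodule ℂ A) (hJc : IsClosed (J : Set A))
    (hJl : ∀ a : A, ∀ x ∈ J, a * x ∈ J) (hJr : ∀ a : A, ∀ x ∈ J, x * a ∈ J)
    (hJs : ∀ x ∈ J, star x ∈ J) (hJM : ∀ x ∈ J, x ∈ M → x = 0)
    (m j : A) (hm : m ∈ M) (hj : j ∈ J) : ‖m‖ ≤ ‖m + j‖ := by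
  have := norm_le_sa M hM J hJc hJl hJr hJs hJM (star m * m) (star (m + j) * (m + j))
    (IsSelfAdjoint.star_mul_self _) (IsSelfAdjoint.star_mul_self _)
    (mul_mem (star_mem hm) hm) (by
      have : star m * m - star (m + j) * (m + j) = -(star m * j + star j * (m + j)) := by
        rw [star_add]; noncomm_ring
      rw [this]
      exact J.neg_mem (J.add_mem (hJl _ _ hj) (hJr _ _ (hJs _ hj))))
  rw [CStarRing.norm_star_mul_self, CStarRing.norm_star_mul_self] at this
  nlinarith [norm_nonneg m, norm_nonneg (m + j)]

theorem exists_ext {A : Type*} [NonUnitalCStarAlgebra A]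
    (M : NonUnitalStarSubalgebra ℂ A) (hM : IsClosed (M : Set A))
    (J : Submodule ℂ A) (hJc : IsClosed (J : Set A))
    (hJl : ∀ a : A, ∀ x ∈ J, a * x ∈ J) (hJr : ∀ a : A, ∀ x ∈ J, x * a ∈ J)
    (hJs : ∀ x ∈ J, star x ∈ J) (hJM : ∀ x ∈ J, x ∈ M → x = 0)
    (φ : M →L[ℂ] ℂ) (hpos : ∀ a : M, 0 ≤ φ (star a * a)) (hn : ‖φ‖ = 1) :
    ∃ ψ : A →L[ℂ] ℂ, ((∀ a : A, 0 ≤ ψ (star a * a)) ∧ ‖ψ‖ = 1) ∧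
      (∀ m : M, ψ (m : A) = φ m) ∧ ∀ x ∈ J, ψ x = 0 := by
  let F : A →ₗ.[ℂ] ℂ := ⟨M.toSubmodule, (φ : M →ₗ[ℂ] ℂ)⟩
  let G : A →ₗ.[ℂ] ℂ := ⟨J, 0⟩
  have hFG : ∀ (x : F.domain) (y : G.domain), (x : A) = y → F x = G y := by
    rintro ⟨x, hx⟩ ⟨y, hy⟩ hxy
    obtain rfl : x = y := hxy
    obtain rfl : x = 0 := hJM x hy hx
    exact map_zero φ
  let H := F.sup G hFG
  have hH : ∀ (m : M) (j : J) (z : H.domain), (m : A) + j = z → H z = φ m := by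
    intro m j z hz
    have := LinearPMap.sup_apply hFG (⟨m, m.2⟩ : F.domain) (j : G.domain) z hz
    refine this.trans ?_
    exact add_zero _
  have hbound : ∀ z : H.domain, ‖H.toFun z‖ ≤ 1 * ‖z‖ := by
    rintro ⟨z, hz⟩
    obtain ⟨m, hm, j, hj, rfl⟩ := Submodule.mem_sup.mp hz
    have h1 := hH ⟨m, hm⟩ ⟨j, hj⟩ ⟨m + j, hz⟩ rfl
    have h2 : H.toFun ⟨m + j, hz⟩ = φ ⟨m, hm⟩ := h1
    rw [h2, one_mul]
    calc ‖φ ⟨m, hm⟩‖ ≤ 1 * ‖(⟨m, hm⟩ : M)‖ := φ.le_of_opNorm_le hn.le _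
      _ = ‖m‖ := one_mul _
      _ ≤ ‖m + j‖ := norm_le M hM J hJc hJl hJr hJs hJM m j hm hj
  obtain ⟨ψ, hψ, hψn⟩ := exists_extension_norm_eq H.domain (H.toFun.mkContinuous 1 hbound)
  have hψ1 : ‖ψ‖ ≤ 1 := hψn.le.trans (LinearMap.mkContinuous_norm_le _ zero_le_one _)
  have hψM : ∀ m : M, ψ (m : A) = φ m := fun m => by
    have hmem : (m : A) ∈ H.domain := (le_sup_left : F.domain ≤ F.domain ⊔ G.domain) m.2
    exact (hψ ⟨m, hmem⟩).trans (hH m 0 ⟨m, hmem⟩ (add_zero _))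
  have hψJ : ∀ x ∈ J, ψ x = 0 := fun x hx => by
    have hmem : x ∈ H.domain := (le_sup_right : G.domain ≤ F.domain ⊔ G.domain) hx
    exact (hψ ⟨x, hmem⟩).trans ((hH 0 ⟨x, hx⟩ ⟨x, hmem⟩ (zero_add _)).trans (map_zero φ))
  refine ⟨ψ, ⟨?_, ?_⟩, hψM, hψJ⟩
  · obtain ⟨Ψ, hΨ1, hΨ⟩ := exists_unitization_ext ψ hψ1
    have : IsClosed (M : Set A) := hM
    let _ : NonUnitalCStarAlgebra M := NonUnitalStarSubalgebra.nonUnitalCStarAlgebra M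
    intro a
    have := pos_of_contraction Ψ hΨ1 (fun ε hε => by
      obtain ⟨u, hu1, hu2⟩ := exists_almost_unit φ hpos hn ε hε
      refine ⟨((u : A) : Unitization ℂ A), by rw [Unitization.norm_inr]; exact hu1, ?_⟩
      rw [← Unitization.inr_star, ← Unitization.inr_mul, hΨ]
      have h9 := hψM (star u * u)
      have h10 : ((star u * u : M) : A) = star (u : A) * u := rfl
      rw [h10] at h9
      rw [h9]; exact hu2) (a : Unitization ℂ A)
    rwa [← Unitization.inr_star, ← Unitization.inr_mul, hΨ] at this
  · refine le_antisymm hψ1 ?_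
    rw [← hn]
    refine φ.opNorm_le_bound (norm_nonneg _) fun m => ?_
    rw [← hψM]
    exact ψ.le_opNorm _

end IdealMeets

/-- Ideal-theoretic form of the abstract uniqueness theorem: under the unique
state-extension and joint-faithfulness hypotheses, every nonzero closed two-sided
ideal of `A` meets `M` nontrivially. -/
theorem ideal_meets_subalgebra {A : Type*}
    [NonUnitalNormedRing A] [StarRing A] [CStarRing A] [NormedSpace ℂ A]
    [IsScalarTower ℂ A A] [SMulCommClass ℂ A A] [StarModule ℂ A] [CompleteSpace A]
    (M : NonUnitalStarSubalgebra ℂ A) (hM : IsClosed (M : Set A))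
    (S : Set (M →L[ℂ] ℂ)) (hS : ∀ φ ∈ S, IsState φ)
    (hext : ∀ φ ∈ S, ∃! ψ : A →L[ℂ] ℂ, IsState ψ ∧ ∀ m : M, ψ (m : A) = φ m)
    (hfaith : ∀ x : A,
      (∀ φ ∈ S, ∀ ψ : A →L[ℂ] ℂ, (IsState ψ ∧ ∀ m : M, ψ (m : A) = φ m) →
        ∀ a : A, ψ (star a * star x * x * a) = 0) → x = 0)
    (J : Submodule ℂ A) (hJc : IsClosed (J : Set A))
    (hJl : ∀ a : A, ∀ x ∈ J, a * x ∈ J) (hJr : ∀ a : A, ∀ x ∈ J, x * a ∈ J)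
    (hJne : J ≠ ⊥) :
    (J : Set A) ∩ (M : Set A) ≠ {0} := by
  intro hJM
  let _ : NonUnitalCStarAlgebra A := { }
  let K : Submodule ℂ A :=
    { carrier := {x | x ∈ J ∧ star x ∈ J}
      add_mem' := fun {x y} hx hy => ⟨J.add_mem hx.1 hy.1, by
        rw [star_add]; exact J.add_mem hx.2 hy.2⟩
      zero_mem' := by simp
      smul_mem' := fun c x hx => ⟨J.smul_mem c hx.1, by
        rw [star_smul]; exact J.smul_mem _ hx.2⟩ }
  have hKc : IsClosed (K : Set A) := hJc.inter (hJc.preimage continuous_star)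
  have hKl : ∀ a : A, ∀ x ∈ K, a * x ∈ K := fun a x hx =>
    ⟨hJl a x hx.1, by rw [star_mul]; exact hJr _ _ hx.2⟩
  have hKr : ∀ a : A, ∀ x ∈ K, x * a ∈ K := fun a x hx =>
    ⟨hJr a x hx.1, by rw [star_mul]; exact hJl _ _ hx.2⟩
  have hKs : ∀ x ∈ K, star x ∈ K := fun x hx => ⟨hx.2, by rw [star_star]; exact hx.1⟩
  have hKM : ∀ x ∈ K, x ∈ M → x = 0 := fun x hx hxM => by
    have : x ∈ (J : Set A) ∩ (M : Set A) := ⟨hx.1, hxM⟩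
    rw [hJM] at this
    exact this
  have hK0 : ∀ x ∈ K, x = 0 := by
    intro x hx
    apply hfaith
    intro φ hφ ψ hψ a
    obtain ⟨ψ', h1, h2, h3⟩ := IdealMeets.exists_ext M hM K hKc hKl hKr hKs hKM φ
      (hS φ hφ).1 (hS φ hφ).2
    have : ψ = ψ' := (hext φ hφ).unique hψ ⟨h1, h2⟩
    rw [this]
    exact h3 _ (hKr _ _ (hKl _ _ hx))
  apply hJne
  rw [eq_bot_iff]
  intro x hx
  have hxx : star x * x ∈ K := ⟨hJl _ _ hx, by
    rw [star_mul, star_star]; exact hJl _ _ hx⟩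
  exact (CStarRing.star_mul_self_eq_zero_iff x).mp (hK0 _ hxx)
end

section
/- Let A be a C*-algebra, M ⊆ A a C*-subalgebra, and J ⊆ A a closed two-sided ideal with J ∩ M = {0}. If φ is a state of M that has a unique extension to a state φ̃ of A, then φ̃(x + m) = φ(m) for every x ∈ J and m ∈ M; in particular, φ̃ vanishes on J. -/
open ComplexOrder

section Helpers

open Filter Topology

lemma exists_au (A : Type*) [NonUnitalCStarAlgebra A] : ∃ l : Filter A, l.NeBot ∧
    (∀ m : A, Tendsto (· * m) l (𝓝 m)) ∧ (∀ᶠ e in l, star e = e) ∧ (∀ᶠ e in l, ‖e‖ ≤ 1) := by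
  let _ := CStarAlgebra.spectralOrder A
  have := CStarAlgebra.spectralOrderedRing A
  have h := CStarAlgebra.increasingApproximateUnit A
  exact ⟨_, h.neBot, h.tendsto_mul_right, h.eventually_star_eq, h.eventually_norm⟩

lemma star_mem_of_ideal {A : Type*} [NonUnitalCStarAlgebra A] 
    (J : Submodule ℂ A) (hJc : IsClosed (J : Set A))
    (hJl : ∀ a : A, ∀ x ∈ J, a * x ∈ J) (hJr : ∀ a : A, ∀ x ∈ J, x * a ∈ J)
    (x : A) (hx : x ∈ J) : star x ∈ J := by
  let K : NonUnitalStarSubalgebra ℂ A :=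
    { carrier := {x | x ∈ J ∧ star x ∈ J}
      add_mem' := fun ha hb => ⟨J.add_mem ha.1 hb.1, by simpa using J.add_mem ha.2 hb.2⟩
      zero_mem' := by simp
      mul_mem' := fun ha hb => ⟨hJr _ _ ha.1, by simpa using hJr _ _ hb.2⟩
      smul_mem' := fun c _ ha => ⟨J.smul_mem _ ha.1, by simpa using J.smul_mem _ ha.2⟩
      star_mem' := fun ha => ⟨ha.2, by simpa using ha.1⟩ }
  have hK : IsClosed (K : Set A) :=
    hJc.inter (hJc.preimage continuous_star)
  obtain ⟨l, hl, h1, h2, h3⟩ := exists_au K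
  let b : K := ⟨x * star x, hJr _ _ hx, by simpa using hJr _ _ hx⟩
  have hb : Tendsto (fun e : K => 2 * ‖e * b - b‖) l (𝓝 0) := by
    have := (tendsto_iff_norm_sub_tendsto_zero.1 (h1 b)).const_mul 2
    simpa using this
  have key : Tendsto (fun e : K => ‖(star x * e - star x : A)‖ ^ 2) l (𝓝 0) := by
    refine squeeze_zero' (.of_forall fun _ => by positivity) ?_ hb
    filter_upwards [h2, h3] with e he he1
    have he' : star (e : A) = e := congrArg Subtype.val he
    rw [sq, ← CStarRing.norm_star_mul_self]
    have : star (star x * (e : A) - star x) * (star x * e - star x) =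
        (e * (x * star x) - x * star x) * e - (e * (x * star x) - x * star x) := by
      simp only [star_sub, star_mul, star_star, he']
      noncomm_ring
    rw [this]
    have e1 : ‖e * b - b‖ = ‖((e : A) * (x * star x) - x * star x)‖ := rfl
    rw [e1]
    have e2 : ‖(e : A)‖ ≤ 1 := he1
    calc _ ≤ _ := norm_sub_le _ _
      _ ≤ ‖((e : A) * (x * star x) - x * star x)‖ * 1 + ‖((e : A) * (x * star x) - x * star x)‖ := by
        gcongr
        exact (norm_mul_le _ _).trans (by gcongr)
      _ = _ := by ring
  have key2 : Tendsto (fun e : K => ‖(star x * e - star x : A)‖) l (𝓝 0) := by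
    have := key.sqrt
    simpa using this
  exact hJc.mem_of_tendsto (tendsto_iff_norm_sub_tendsto_zero.2 key2)
    (.of_forall fun e => hJl _ _ e.2.1)

lemma norm_le_add {A : Type*} [NonUnitalCStarAlgebra A] 
    (M : NonUnitalStarSubalgebra ℂ A) (hM : IsClosed (M : Set A))
    (J : Submodule ℂ A) (hJc : IsClosed (J : Set A))
    (hJl : ∀ a : A, ∀ x ∈ J, a * x ∈ J) (hJr : ∀ a : A, ∀ x ∈ J, x * a ∈ J)
    (hJM : (J : Set A) ∩ (M : Set A) = {0}) (x : A) (hx : x ∈ J) (m : A) (hm : m ∈ M) :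
    ‖m‖ ≤ ‖x + m‖ := by
  have hs := star_mem_of_ideal J hJc hJl hJr
  let D : NonUnitalStarSubalgebra ℂ (A × A) :=
    { carrier := {p | p.1 - p.2 ∈ J ∧ p.2 ∈ M}
      add_mem' := fun {a b} ha hb => ⟨by
        have := J.add_mem ha.1 hb.1
        rwa [sub_add_sub_comm] at this, M.add_mem ha.2 hb.2⟩
      zero_mem' := by simp
      mul_mem' := fun {a b} ha hb => ⟨by
        have := J.add_mem (hJr b.1 _ ha.1) (hJl a.2 _ hb.1)
        rwa [sub_mul, mul_sub, sub_add_sub_cancel] at this, M.mul_mem ha.2 hb.2⟩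
      smul_mem' := fun c a ha => ⟨by
        have := J.smul_mem c ha.1
        rwa [smul_sub] at this, M.smul_mem c ha.2⟩
      star_mem' := fun {a} ha => ⟨by
        have := hs _ ha.1
        rwa [star_sub] at this, star_mem ha.2⟩ }
  have hD : IsClosed (D : Set (A × A)) :=
    (hJc.preimage (continuous_fst.sub continuous_snd)).inter (hM.preimage continuous_snd)
  let π : D →⋆ₙₐ[ℂ] A :=
    (NonUnitalStarAlgHom.fst ℂ A A).comp (NonUnitalStarSubalgebraClass.subtype D)
  have hπ : Function.Injective π := by
    rw [injective_iff_map_eq_zero]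
    rintro ⟨⟨a, b⟩, h, h'⟩ h0
    have h0 : a = 0 := h0
    subst h0
    have : b ∈ (J : Set A) ∩ M := ⟨by simpa using h, h'⟩
    rw [hJM] at this
    have : b = 0 := this
    subst this
    rfl
  have := NonUnitalStarAlgHom.norm_map π hπ ⟨(x + m, m), by simpa using hx, hm⟩
  have h2 : ‖x + m‖ = ‖(x + m, m)‖ := this
  rw [h2]
  exact norm_snd_le (x + m, m)


lemma cs_state {B : Type*} [NonUnitalCStarAlgebra B] (φ : B →L[ℂ] ℂ)
    (hp : ∀ a : B, 0 ≤ φ (star a * a)) (a b : B) :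
    ‖φ (star a * b)‖ ^ 2 ≤ (φ (star a * a)).re * (φ (star b * b)).re := by
  let _ := CStarAlgebra.spectralOrder B
  have := CStarAlgebra.spectralOrderedRing B
  let f : B →ₚ[ℂ] ℂ := PositiveLinearMap.mk₀ (φ : B →ₗ[ℂ] ℂ) (by
    intro x hx
    obtain ⟨y, rfl⟩ := CStarAlgebra.nonneg_iff_eq_star_mul_self.1 hx
    exact hp y)
  have h := norm_inner_le_norm (𝕜 := ℂ) (f.toPreGNS a) (f.toPreGNS b)
  have h1 : (φ (star a * a)).re = ‖f.toPreGNS a‖ ^ 2 := by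
    rw [f.preGNS_norm_def, Real.sq_sqrt]
    · rfl
    · exact (Complex.le_def.1 (hp a)).1
  have h2 : (φ (star b * b)).re = ‖f.toPreGNS b‖ ^ 2 := by
    rw [f.preGNS_norm_def, Real.sq_sqrt]
    · rfl
    · exact (Complex.le_def.1 (hp b)).1
  rw [h1, h2, ← mul_pow]
  have h3 : ‖φ (star a * b)‖ ≤ ‖f.toPreGNS a‖ * ‖f.toPreGNS b‖ := h
  gcongr

lemma exists_near {B : Type*} [NonUnitalCStarAlgebra B] (φ : B →L[ℂ] ℂ)
    (hp : ∀ a : B, 0 ≤ φ (star a * a)) (hn : ‖φ‖ = 1) (ε : ℝ) (hε : 0 < ε) :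
    ∃ u : B, ‖u‖ ≤ 1 ∧ 1 - ε ≤ (φ (star u * u)).re := by
  by_contra! hc
  have hc0 : 0 < 1 - ε := by simpa using hc 0 (by simp)
  obtain ⟨l, hl, h1, h2, h3⟩ := exists_au B
  have hb : ∀ m : B, ‖φ m‖ ≤ √(1 - ε) * ‖m‖ := by
    intro m
    have ht : Tendsto (fun e : B => ‖φ (e * m)‖) l (𝓝 ‖φ m‖) :=
      ((φ.continuous.tendsto m).comp (h1 m)).norm
    refine le_of_tendsto ht ?_
    filter_upwards [h2, h3] with e he he1
    have h := cs_state φ hp e m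
    have hm : (φ (star m * m)).re ≤ ‖m‖ ^ 2 := by
      calc _ ≤ ‖φ (star m * m)‖ := Complex.re_le_norm _
        _ ≤ ‖φ‖ * ‖star m * m‖ := φ.le_opNorm _
        _ = _ := by rw [hn, CStarRing.norm_star_mul_self]; ring
    have hm0 : 0 ≤ (φ (star m * m)).re := (Complex.le_def.1 (hp m)).1
    rw [he] at h
    have hce := hc e he1
    rw [he] at hce
    apply le_of_sq_le_sq _ (by positivity)
    rw [mul_pow, Real.sq_sqrt hc0.le]
    exact h.trans (by gcongr)
  have h4 : ‖φ‖ ≤ √(1 - ε) := φ.opNorm_le_bound (by positivity) hb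
  rw [hn] at h4
  have := Real.one_le_sqrt.1 h4
  linarith

lemma norm_two_mul_sub {U : Type*} [CStarAlgebra U] (b : U) (c : ℝ) (h : ‖star b * b‖ ≤ 2 * c) :
    ‖star b * b - algebraMap ℂ U (c : ℂ)‖ ≤ c := by
  have e : algebraMap ℝ U c = algebraMap ℂ U (c : ℂ) :=
    IsScalarTower.algebraMap_apply ℝ ℂ U _
  rw [← e]
  let _ := CStarAlgebra.spectralOrder U
  have := CStarAlgebra.spectralOrderedRing U
  have hsa : IsSelfAdjoint (star b * b) := .star_mul_self b
  have : star b * b - algebraMap ℝ U c = cfc (fun x : ℝ => x - c) (star b * b) := by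
    rw [cfc_sub .., cfc_id' ℝ _, cfc_const ..]
  rw [this]
  rcases subsingleton_or_nontrivial U with hU | hU
  · rw [Subsingleton.elim (cfc (fun x : ℝ => x - c) (star b * b)) 0, norm_zero]
    linarith [norm_nonneg (star b * b)]
  refine norm_cfc_le (by linarith [norm_nonneg (star b * b)]) fun x hx => ?_
  have h0 : 0 ≤ x := spectrum_nonneg_of_nonneg (star_mul_self_nonneg b) hx
  have h1 : ‖x‖ ≤ ‖star b * b‖ := spectrum.norm_le_norm_of_mem hx
  rw [Real.norm_eq_abs] at *
  rw [abs_le]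
  have := le_abs_self x
  constructor <;> linarith

lemma unital_pos {U : Type*} [CStarAlgebra U] (F : U →L[ℂ] ℂ) (hF : ‖F‖ ≤ 1) (h1 : F 1 = 1)
    (b : U) : 0 ≤ F (star b * b) := by
  have hle : ∀ x, ‖F x‖ ≤ ‖x‖ := fun x => by
    simpa using F.le_of_opNorm_le hF x
  set a := star b * b with ha
  have hsa : star a = a := by simp [ha]
  have hr : ∀ t : ℂ, F (algebraMap ℂ U t) = t := fun t => by
    rw [Algebra.algebraMap_eq_smul_one, map_smul, h1]; simp
  rw [Complex.le_def]
  constructor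
  · have h := norm_two_mul_sub b ‖a‖ (by linarith [norm_nonneg a])
    have h2 := (hle _).trans h
    rw [map_sub, hr] at h2
    have h3 := (Complex.abs_re_le_norm _).trans h2
    rw [abs_le] at h3
    simp only [Complex.sub_re, Complex.ofReal_re] at h3
    simpa using (by linarith [h3.1] : 0 ≤ (F a).re)
  · have key : ∀ t : ℝ, ((F a).im + t) ^ 2 ≤ ‖a‖ ^ 2 + t ^ 2 := by
      intro t
      have h := hle (a + algebraMap ℂ U (t * Complex.I))
      rw [map_add, hr] at h
      have h2 := (Complex.abs_im_le_norm _).trans h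
      simp only [Complex.add_im, Complex.mul_im, Complex.ofReal_re, Complex.I_im,
        Complex.ofReal_im, Complex.I_re, mul_one, mul_zero, add_zero] at h2
      have h3 : ‖a + algebraMap ℂ U (t * Complex.I)‖ ^ 2 ≤ ‖a‖ ^ 2 + t ^ 2 := by
        rw [sq, ← CStarRing.norm_star_mul_self]
        have : star (a + algebraMap ℂ U (t * Complex.I)) * (a + algebraMap ℂ U (t * Complex.I))
            = a * a + algebraMap ℂ U ((t : ℂ) ^ 2) := by
          rw [star_add, hsa, ← algebraMap_star_comm]
          have hs : star ((t : ℂ) * Complex.I) = -((t : ℂ) * Complex.I) := by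
            simp
          have hc : algebraMap ℂ U (t * Complex.I) * a = a * algebraMap ℂ U (t * Complex.I) :=
            Algebra.commutes _ _
          have h2 : (t : ℂ) ^ 2 = -((t * Complex.I) * (t * Complex.I)) := by
            linear_combination ((t : ℂ) ^ 2) * Complex.I_sq
          rw [hs, h2, map_neg, map_neg, map_mul (algebraMap ℂ U) ((t : ℂ) * Complex.I), add_mul,
            mul_add, mul_add, neg_mul, neg_mul, hc]
          abel
        rw [this]
        refine (norm_add_le _ _).trans ?_
        gcongr
        · rw [sq]; exact norm_mul_le _ _
        · rcases subsingleton_or_nontrivial U with hU | hU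
          · rw [Subsingleton.elim (algebraMap ℂ U ((t : ℂ) ^ 2)) 0, norm_zero]; positivity
          · rw [norm_algebraMap']; simp
      refine le_trans ?_ h3
      rw [← sq_abs]
      gcongr
    by_contra hne
    have hne : (F a).im ≠ 0 := fun h => hne (by simp [h])
    have := key ((‖a‖ ^ 2) / (F a).im)
    have e : ((F a).im + ‖a‖ ^ 2 / (F a).im) ^ 2
      = (F a).im ^ 2 + 2 * ‖a‖ ^ 2 + (‖a‖ ^ 2 / (F a).im) ^ 2 := by
      field_simp
      ring
    have := sq_pos_of_ne_zero hne
    nlinarith [sq_nonneg ‖a‖]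

lemma pos_of_near {A : Type*} [NonUnitalCStarAlgebra A] (f : A →L[ℂ] ℂ) (hf : ‖f‖ = 1)
    (h : ∀ ε : ℝ, 0 < ε → ∃ u : A, ‖u‖ ≤ 1 ∧ 1 - ε ≤ (f (star u * u)).re) (a : A) :
    0 ≤ f (star a * a) := by
  let i : A →ₗᵢ[ℂ] Unitization ℂ A :=
    { toLinearMap := Unitization.inrHom ℂ ℂ A
      norm_map' := fun x => Unitization.norm_inr (𝕜 := ℂ) x }
  have hi : ∀ x, i x = (x : Unitization ℂ A) := fun x => rfl
  let e := i.equivRange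
  obtain ⟨F, hF, hFn⟩ := exists_extension_norm_eq (LinearMap.range i.toLinearMap)
    (f.comp (e.symm.toContinuousLinearEquiv : _ →L[ℂ] A))
  have hFi : ∀ x : A, F (x : Unitization ℂ A) = f x := by
    intro x
    have := hF (e x)
    rw [show f x = f (e.symm (e x)) by rw [e.symm_apply_apply]]
    exact this
  have hF1 : ‖F‖ ≤ 1 := by
    rw [hFn]
    refine ContinuousLinearMap.opNorm_le_bound _ zero_le_one fun y => ?_
    have := f.le_opNorm (e.symm y)
    rw [hf, e.symm.norm_map] at this
    exact this
  have hle : ∀ x, ‖F x‖ ≤ ‖x‖ := fun x => by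
    simpa using F.le_of_opNorm_le hF1 x
  have hn1 : ‖F 1‖ ≤ 1 := by simpa using hle 1
  have hre : 1 ≤ (F 1).re := by
    refine le_of_forall_pos_le_add fun ε hε => ?_
    obtain ⟨u, hu, hu2⟩ := h (ε / 2) (by positivity)
    have h3 := norm_two_mul_sub (u : Unitization ℂ A) (1 / 2) (by
      rw [CStarRing.norm_star_mul_self, Unitization.norm_inr]
      nlinarith [norm_nonneg u])
    have h4 := (Complex.abs_re_le_norm _).trans ((hle _).trans h3)
    rw [Algebra.algebraMap_eq_smul_one, map_sub, map_smul, ← Unitization.inr_star, ← Unitization.inr_mul, hFi, abs_le] at h4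
    simp only [Complex.sub_re, smul_eq_mul, Complex.re_ofReal_mul] at h4
    linarith [h4.2]
  have hF11 : F 1 = 1 := by
    have h5 : (F 1).re ^ 2 + (F 1).im ^ 2 ≤ 1 := by
      have := Complex.sq_norm (F 1)
      rw [Complex.normSq_apply] at this
      nlinarith [norm_nonneg (F 1)]
    apply Complex.ext
    · simp only [Complex.one_re]; nlinarith [sq_nonneg (F 1).im]
    · simp only [Complex.one_im]
      have : (F 1).im ^ 2 ≤ 0 := by nlinarith
      exact pow_eq_zero_iff (two_ne_zero) |>.1 (le_antisymm this (sq_nonneg _))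
  have := unital_pos F hF1 hF11 (a : Unitization ℂ A)
  rwa [← Unitization.inr_star, ← Unitization.inr_mul, hFi] at this

lemma exists_good_ext {A : Type*} [NonUnitalCStarAlgebra A]
    (M : NonUnitalStarSubalgebra ℂ A) (hM : IsClosed (M : Set A))
    (J : Submodule ℂ A) (hJc : IsClosed (J : Set A))
    (hJl : ∀ a : A, ∀ x ∈ J, a * x ∈ J) (hJr : ∀ a : A, ∀ x ∈ J, x * a ∈ J)
    (hJM : (J : Set A) ∩ (M : Set A) = {0})
    (φ : M →L[ℂ] ℂ) (hp : ∀ a : M, 0 ≤ φ (star a * a)) (hn : ‖φ‖ = 1) :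
    ∃ f : A →L[ℂ] ℂ, ((∀ a : A, 0 ≤ f (star a * a)) ∧ ‖f‖ = 1) ∧
      (∀ m : M, f (m : A) = φ m) ∧ ∀ x ∈ J, f x = 0 := by
  have hnorm := norm_le_add M hM J hJc hJl hJr hJM
  -- work on the image of `M` in the quotient `A ⧸ J`
  let q : A →ₗ[ℂ] A ⧸ J := J.mkQ
  let i : M →ₗᵢ[ℂ] A ⧸ J :=
    { toLinearMap := q.comp (M.toNonUnitalSubalgebra.toSubmodule.subtype : _ →ₗ[ℂ] A)
      norm_map' := fun m => by
        apply le_antisymm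
        · exact Submodule.Quotient.norm_mk_le J (m : A)
        · change _ ≤ ‖(Submodule.Quotient.mk (m : A) : A ⧸ J)‖
          refine le_of_forall_pos_le_add fun ε hε => ?_
          obtain ⟨y, hy, hy2⟩ := Submodule.Quotient.norm_mk_lt
            (Submodule.Quotient.mk (m : A) : A ⧸ J) hε
          have hy3 := (Submodule.Quotient.eq J).1 hy
          have := hnorm (y - m) hy3 m m.2
          rw [sub_add_cancel] at this
          exact this.trans hy2.le }
  let e := i.equivRange
  obtain ⟨F, hF, hFn⟩ := exists_extension_norm_eq (LinearMap.range i.toLinearMap)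
    (φ.comp (e.symm.toContinuousLinearEquiv : _ →L[ℂ] M))
  let Q : A →L[ℂ] A ⧸ J := q.mkContinuous 1 (fun x => by
    simpa using! Submodule.Quotient.norm_mk_le J x)
  have hfM : ∀ m : M, F (Q (m : A)) = φ m := by
    intro m
    have := hF (e m)
    simpa using! this
  have hF1 : ‖F‖ ≤ 1 := by
    rw [hFn]
    refine ContinuousLinearMap.opNorm_le_bound _ zero_le_one fun y => ?_
    have := φ.le_opNorm (e.symm y)
    rw [hn, e.symm.norm_map] at this
    exact this
  have hQ : ‖Q‖ ≤ 1 := LinearMap.mkContinuous_norm_le _ zero_le_one _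
  have hfn : ‖F.comp Q‖ = 1 := by
    apply le_antisymm
    · refine (F.opNorm_comp_le Q).trans ?_
      nlinarith [norm_nonneg F, norm_nonneg Q]
    · rw [← hn]
      refine φ.opNorm_le_bound (norm_nonneg _) fun m => ?_
      rw [← hfM]
      exact (F.comp Q).le_opNorm (m : A)
  refine ⟨F.comp Q, ⟨pos_of_near _ hfn ?_, hfn⟩, hfM, ?_⟩
  · intro ε hε
    have : IsClosed (M : Set A) := hM
    obtain ⟨u, hu, hu2⟩ := exists_near φ hp hn ε hε
    refine ⟨u, hu, ?_⟩
    have := hfM (star u * u)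
    rw [← this] at hu2
    exact hu2
  · intro x hx
    have : Q x = 0 := (Submodule.Quotient.mk_eq_zero J).2 hx
    simp [this]


end Helpers

/-- If `J` is a closed two-sided ideal with `J ∩ M = {0}` and `φ` is a state of `M`
with unique state extension `ψ` to `A`, then `ψ (x + m) = φ m` for `x ∈ J`, `m ∈ M`;
in particular `ψ` vanishes on `J`. -/
theorem unique_extension_kills_ideal {A : Type*}
    [NonUnitalNormedRing A] [StarRing A] [CStarRing A] [NormedSpace ℂ A]
    [IsScalarTower ℂ A A] [SMulCommClass ℂ A A] [StarModule ℂ A] [CompleteSpace A]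
    (M : NonUnitalStarSubalgebra ℂ A) (hM : IsClosed (M : Set A))
    (J : Submodule ℂ A) (hJc : IsClosed (J : Set A))
    (hJl : ∀ a : A, ∀ x ∈ J, a * x ∈ J) (hJr : ∀ a : A, ∀ x ∈ J, x * a ∈ J)
    (hJM : (J : Set A) ∩ (M : Set A) = {0})
    (φ : M →L[ℂ] ℂ) (hφ : IsState φ)
    (ψ : A →L[ℂ] ℂ) (hψ : IsState ψ) (hψext : ∀ m : M, ψ (m : A) = φ m)
    (huniq : ∀ ψ' : A →L[ℂ] ℂ, IsState ψ' → (∀ m : M, ψ' (m : A) = φ m) → ψ' = ψ) :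
    (∀ x ∈ J, ∀ m : M, ψ (x + (m : A)) = φ m) ∧ (∀ x ∈ J, ψ x = 0) := by
  let inst : NonUnitalCStarAlgebra A := {}
  obtain ⟨f, hf, hfM, hfJ⟩ :=
    exists_good_ext M hM J hJc hJl hJr hJM φ hφ.1 hφ.2
  have h := huniq f hf hfM
  subst h
  refine ⟨fun x hx m => ?_, hfJ⟩
  rw [map_add, hfJ x hx, hfM, zero_add]
end

section
/- Let A be a C*-algebra (not necessarily unital), M ⊆ A a C*-subalgebra, and φ a state of M. Suppose that for every a ∈ A and every ε > 0 there exist a positive element b ∈ M with ‖b‖ = φ(b) = 1 and an element c ∈ M with ‖b a b − c‖ < ε. Then φ has a unique extension to a state of A. -/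
open ComplexOrder

lemma aux_norm_two_smul_sub_one {B : Type*} [CStarAlgebra B] (b c : B) (hbc : b = star c * c)
    (hb : ‖b‖ ≤ 1) : ‖b + b - 1‖ ≤ 1 := by
  letI := CStarAlgebra.spectralOrder B
  haveI := CStarAlgebra.spectralOrderedRing B
  have hbs : star b = b := by simp [hbc]
  have h1 : 0 ≤ b - b * b := by
    have hcc : c * star c ≤ 1 := by
      rw [← CStarAlgebra.norm_le_one_iff_of_nonneg _ (mul_star_self_nonneg c),
        CStarRing.norm_self_mul_star]
      rwa [hbc, CStarRing.norm_star_mul_self] at hb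
    have := star_left_conjugate_nonneg (sub_nonneg.2 hcc) c
    convert this using 1
    rw [hbc]; noncomm_ring
  have hs : star (b + b - 1) = b + b - 1 := by simp [hbs]
  have h2 : ‖star (b + b - 1) * (b + b - 1)‖ ≤ 1 := by
    rw [CStarAlgebra.norm_le_one_iff_of_nonneg _ (star_mul_self_nonneg _), hs]
    rw [← sub_nonneg]
    have : 0 ≤ (b - b * b) + (b - b * b) + ((b - b * b) + (b - b * b)) := by positivity
    convert this using 1
    noncomm_ring
  rw [CStarRing.norm_star_mul_self] at h2
  nlinarith [norm_nonneg (b + b - 1)]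

lemma aux_real {B : Type*} [CStarAlgebra B] (f : B →L[ℂ] ℂ) (hf : ‖f‖ ≤ 1) (h1 : f 1 = 1)
    (a : B) (ha : star a = a) : (f a).im = 0 := by
  have key : ∀ t : ℝ, 2 * (f a).im * t ≤ ‖a‖ ^ 2 := by
    intro t
    have e1 : star (a + ((t : ℂ) * Complex.I) • (1 : B)) * (a + ((t : ℂ) * Complex.I) • (1 : B))
        = a * a + ((t : ℂ) ^ 2) • (1 : B) := by
      simp only [star_add, star_smul, star_one, ha, star_mul', Complex.star_def,
        Complex.conj_ofReal, Complex.conj_I, add_mul, mul_add, smul_mul_assoc, mul_smul_comm,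
        one_mul, mul_one, smul_add, smul_smul]
      have : (t : ℂ) * Complex.I * (t * -Complex.I) = t ^ 2 := by
        linear_combination (-(t : ℂ) ^ 2) * Complex.I_sq
      rw [this, mul_neg, neg_smul]
      abel
    have e2 : ‖a + ((t : ℂ) * Complex.I) • (1 : B)‖ ^ 2 ≤ ‖a‖ ^ 2 + t ^ 2 := by
      rw [sq, ← CStarRing.norm_star_mul_self, e1]
      have one_le : ‖(1 : B)‖ ≤ 1 := by
        rcases subsingleton_or_nontrivial B with h | h
        · rw [Subsingleton.elim (1 : B) 0]; simp
        · simp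
      calc _ ≤ ‖a * a‖ + ‖((t : ℂ) ^ 2) • (1 : B)‖ := norm_add_le _ _
        _ ≤ ‖a‖ ^ 2 + t ^ 2 := by
          gcongr
          · rw [sq]; exact norm_mul_le _ _
          · rw [norm_smul, norm_pow, Complex.norm_real, Real.norm_eq_abs, sq_abs]
            nlinarith [sq_nonneg t]
    have e3 : ‖f (a + ((t : ℂ) * Complex.I) • (1 : B))‖ ≤ ‖a + ((t : ℂ) * Complex.I) • (1 : B)‖ := by
      refine (f.le_opNorm _).trans ?_
      exact mul_le_of_le_one_left (norm_nonneg _) hf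
    have e4 : ‖f (a + ((t : ℂ) * Complex.I) • (1 : B))‖ ^ 2
        = (f a).re ^ 2 + ((f a).im + t) ^ 2 := by
      rw [map_add, map_smul, h1, ← Complex.normSq_eq_norm_sq, Complex.normSq_apply]
      simp
      ring
    have e5 := pow_le_pow_left₀ (norm_nonneg _) e3 2
    nlinarith [sq_nonneg (f a).re, sq_nonneg (f a).im]
  by_contra hne
  have := key ((‖a‖ ^ 2 + 1) / (2 * (f a).im))
  rw [mul_div_cancel₀ _ (by simpa using hne)] at this
  linarith

lemma aux_pos_s3 {B : Type*} [CStarAlgebra B] (f : B →L[ℂ] ℂ) (hf : ‖f‖ ≤ 1) (h1 : f 1 = 1)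
    (x : B) : 0 ≤ f (star x * x) := by
  have him := aux_real f hf h1 (star x * x) (by simp)
  letI := CStarAlgebra.spectralOrder B
  haveI := CStarAlgebra.spectralOrderedRing B
  rw [Complex.nonneg_iff]
  refine ⟨?_, him.symm⟩
  set r : ℝ := ‖star x * x‖ with hr
  have hr0 : 0 ≤ r := norm_nonneg _
  have hle : star x * x ≤ algebraMap ℝ B r :=
    IsSelfAdjoint.le_algebraMap_norm_self (a := star x * x) (by simp)
  have hn : ‖algebraMap ℝ B r - star x * x‖ ≤ r := by
    rw [CStarAlgebra.norm_le_iff_le_algebraMap _ hr0 (sub_nonneg.2 hle)]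
    exact sub_le_self _ (star_mul_self_nonneg x)
  have h3 : ‖f (algebraMap ℝ B r - star x * x)‖ ≤ r :=
    ((f.le_opNorm _).trans (mul_le_of_le_one_left (norm_nonneg _) hf)).trans hn
  have h4 : f (algebraMap ℝ B r) = r := by
    have : algebraMap ℝ B r = (r : ℂ) • (1 : B) := by
      rw [Algebra.algebraMap_eq_smul_one, Complex.coe_smul]
    rw [this, map_smul, h1]; simp
  rw [map_sub, h4] at h3
  have h5 := (Complex.re_le_norm _).trans h3
  simp at h5
  exact h5

lemma aux_cs {B : Type*} [CStarAlgebra B] (f : B →L[ℂ] ℂ) (hpos : ∀ x, 0 ≤ f (star x * x))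
    (x y : B) (hx : f (star x * x) = 0) : f (star x * y) = 0 ∧ f (star y * x) = 0 := by
  have key : ∀ t : ℂ, 0 ≤ t * f (star x * y) + star t * f (star y * x)
      + (star t * t) * f (star y * y) := by
    intro t
    have := hpos (x + t • y)
    simp only [star_add, star_smul, add_mul, mul_add, smul_mul_assoc, mul_smul_comm, smul_smul,
      map_add, map_smul, hx, smul_eq_mul, zero_add] at this
    convert this using 1
    ring
  obtain ⟨hy, hy'⟩ := Complex.nonneg_iff.1 (hpos y)
  set p := f (star x * y)
  set q := f (star y * x)
  set s := f (star y * y)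
  have k1 := fun r : ℝ => Complex.nonneg_iff.1 (key r)
  have k2 := fun r : ℝ => Complex.nonneg_iff.1 (key (r * Complex.I))
  simp [← hy'] at k1 k2
  have lin : ∀ u : ℝ, (∀ r : ℝ, 0 ≤ r * u + r * r * s.re) → u = 0 := by
    intro u hu
    by_contra hne
    have hu2 : 0 < u ^ 2 := by positivity
    have := hu (-u / (s.re + 1))
    have hs : 0 < s.re + 1 := by linarith
    have e : -u / (s.re + 1) * u + -u / (s.re + 1) * (-u / (s.re + 1)) * s.re
      = - u ^ 2 / (s.re + 1) ^ 2 := by field_simp; ring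
    rw [e] at this
    have : 0 < u ^ 2 / (s.re + 1) ^ 2 := by positivity
    rw [neg_div] at *
    linarith
  have a1 := lin (p.re + q.re) (fun r => by linarith [(k1 r).1])
  have a2 := lin (q.im - p.im) (fun r => by linarith [(k2 r).1])
  have a3 := (k1 1).2
  have a4 := (k2 1).2
  simp at a3 a4
  constructor <;> apply Complex.ext <;> simp <;> linarith

lemma aux_unital {B : Type*} [CStarAlgebra B] (f : B →L[ℂ] ℂ) (hf : ‖f‖ ≤ 1) (b c : B)
    (hbc : b = star c * c) (hb : ‖b‖ ≤ 1) (hfb : f b = 1) :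
    (∀ x, 0 ≤ f (star x * x)) ∧ ∀ a, f a = f (b * a * b) := by
  have hle : ∀ x, ‖f x‖ ≤ ‖x‖ := fun x =>
    (f.le_opNorm x).trans (mul_le_of_le_one_left (norm_nonneg _) hf)
  have hbs : star b = b := by simp [hbc]
  have h1 : f 1 = 1 := by
    have h2 := (hle _).trans (aux_norm_two_smul_sub_one b c hbc hb)
    have one_le : ‖(1 : B)‖ ≤ 1 := by
      rcases subsingleton_or_nontrivial B with h | h
      · rw [Subsingleton.elim (1 : B) 0]; simp
      · simp
    have h3 := (hle 1).trans one_le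
    rw [map_sub, map_add, hfb] at h2
    have h2' := pow_le_pow_left₀ (norm_nonneg _) h2 2
    have h3' := pow_le_pow_left₀ (norm_nonneg _) h3 2
    rw [← Complex.normSq_eq_norm_sq, Complex.normSq_apply] at h2' h3'
    simp at h2' h3'
    have hre : (f 1).re = 1 := by nlinarith [sq_nonneg (f 1).im, sq_nonneg ((f 1).re - 1)]
    have him : (f 1).im = 0 := by
      rw [hre] at h3'
      nlinarith [sq_nonneg (f 1).im]
    apply Complex.ext <;> simp [hre, him]
  have hpos := aux_pos_s3 f hf h1
  refine ⟨hpos, fun a => ?_⟩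
  have hz : f (star (1 - b) * (1 - b)) = 0 := by
    have e : star (1 - b) * (1 - b) = 1 - b - b + b * b := by
      simp [hbs]; noncomm_ring
    have h0 := hpos (1 - b)
    rw [e] at h0 ⊢
    simp only [map_add, map_sub, h1, hfb] at h0 ⊢
    obtain ⟨hre, him⟩ := Complex.nonneg_iff.1 h0
    have hbb : (f (b * b)).re ≤ 1 :=
      (Complex.re_le_norm _).trans ((hle _).trans ((norm_mul_le _ _).trans
        (mul_le_one₀ hb (norm_nonneg _) hb)))
    apply Complex.ext
    · simp at hre ⊢; linarith
    · exact him.symm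
  have s1 := (aux_cs f hpos (1 - b) a hz).1
  have s2 := (aux_cs f hpos (1 - b) (star (b * a)) hz).2
  simp only [star_sub, star_one, hbs, sub_mul, one_mul, map_sub] at s1
  simp only [star_star, mul_sub, mul_one, map_sub] at s2
  rw [sub_eq_zero.1 s1, sub_eq_zero.1 s2]

lemma aux_nonunital {A : Type*} [NonUnitalCStarAlgebra A] (f : A →L[ℂ] ℂ) (hf : ‖f‖ ≤ 1)
    (b c : A) (hbc : b = star c * c) (hb : ‖b‖ ≤ 1) (hfb : f b = 1) :
    (∀ x, 0 ≤ f (star x * x)) ∧ ∀ a, f a = f (b * a * b) := by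
  let ι : A →ₗᵢ[ℂ] Unitization ℂ A :=
    { toLinearMap := Unitization.inrHom ℂ ℂ A
      norm_map' := fun a => Unitization.norm_inr a }
  let e := ι.equivRange
  obtain ⟨g, hg, hgn⟩ := exists_extension_norm_eq (LinearMap.range ι.toLinearMap)
    (f.comp (e.symm.toContinuousLinearEquiv : LinearMap.range ι.toLinearMap →L[ℂ] A))
  have hgf : ∀ a : A, g (a : Unitization ℂ A) = f a := by
    intro a
    have := hg (e a)
    have he : ((e a : LinearMap.range ι.toLinearMap) : Unitization ℂ A) = (a : Unitization ℂ A) := rfl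
    rw [← he, this]
    simp
  have hgn' : ‖g‖ ≤ 1 := by
    rw [hgn]
    refine ContinuousLinearMap.opNorm_le_bound _ zero_le_one fun x => ?_
    refine (f.le_opNorm _).trans ?_
    have : ‖e.symm x‖ = ‖x‖ := e.symm.norm_map x
    exact mul_le_mul hf this.le (norm_nonneg _) zero_le_one
  obtain ⟨h1, h2⟩ := aux_unital g hgn' (b : Unitization ℂ A) (c : Unitization ℂ A)
    (by rw [hbc]; simp) (by rw [Unitization.norm_inr]; exact hb) (by rw [hgf, hfb])
  constructor
  · intro x
    have := h1 (x : Unitization ℂ A)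
    rwa [← Unitization.inr_star, ← Unitization.inr_mul, hgf] at this
  · intro a
    have := h2 (a : Unitization ℂ A)
    rwa [← Unitization.inr_mul, ← Unitization.inr_mul, hgf, hgf] at this

/-- Anderson's compression criterion (non-unital version): if every element of `A`
can be compressed by norm-one positive elements of `M` on which `φ` is `1` to be
arbitrarily close to `M`, then `φ` has a unique state extension to `A`. -/
theorem compression_unique_extension {A : Type*}
    [NonUnitalNormedRing A] [StarRing A] [CStarRing A] [NormedSpace ℂ A]
    [IsScalarTower ℂ A A] [SMulCommClass ℂ A A] [StarModule ℂ A] [CompleteSpace A]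
    (M : NonUnitalStarSubalgebra ℂ A) (hM : IsClosed (M : Set A))
    (φ : M →L[ℂ] ℂ) (hφ : IsState φ)
    (h : ∀ a : A, ∀ ε > (0 : ℝ), ∃ b : M,
      (∃ c : A, (b : A) = star c * c) ∧ ‖(b : A)‖ = 1 ∧ φ b = 1 ∧
      ∃ c' : M, ‖(b : A) * a * (b : A) - (c' : A)‖ < ε) :
    ∃! ψ : A →L[ℂ] ℂ, IsState ψ ∧ ∀ m : M, ψ (m : A) = φ m := by
  letI : NonUnitalCStarAlgebra A := {}
  obtain ⟨ψ, hψ, hψn⟩ := exists_extension_norm_eq M.toSubmodule φ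
  have hn : ‖ψ‖ = 1 := hψn.trans hφ.2
  have hext : ∀ m : M, ψ (m : A) = φ m := fun m => hψ m
  refine ⟨ψ, ⟨⟨?_, hn⟩, hext⟩, ?_⟩
  · obtain ⟨b, ⟨c, hc⟩, hb, hfb, -⟩ := h 0 1 one_pos
    exact (aux_nonunital ψ hn.le b c hc hb.le (by rw [hext, hfb])).1
  · rintro ψ' ⟨⟨-, hn'⟩, hext'⟩
    ext a
    refine eq_of_forall_dist_le fun ε hε => ?_
    obtain ⟨b, ⟨c, hc⟩, hb, hfb, c', hc'⟩ := h a (ε / 2) (by positivity)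
    rw [(aux_nonunital ψ hn.le b c hc hb.le (by rw [hext, hfb])).2 a,
      (aux_nonunital ψ' hn'.le b c hc hb.le (by rw [hext', hfb])).2 a, dist_eq_norm]
    have e : ψ' ((b : A) * a * b) - ψ ((b : A) * a * b)
        = ψ' ((b : A) * a * b - c') - ψ ((b : A) * a * b - c') := by
      rw [map_sub, map_sub, hext, hext']; ring
    rw [e]
    have l1 := ψ.le_opNorm ((b : A) * a * b - c')
    have l2 := ψ'.le_opNorm ((b : A) * a * b - c')
    rw [hn, one_mul] at l1
    rw [hn', one_mul] at l2
    exact (norm_sub_le _ _).trans (by linarith)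
end
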